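/- There exist a point a of AG(4,3) and four pairwise disjoint maximal caps in AG(4,3) whose union is the complement of {a}; that is, AG(4,3) can be partitioned into 4 mutually disjoint maximal caps together with a single point (their common anchor). -/

import Mathlib

/-- A cap in `AG(n,3)`: a finite set of points of `Fin n → ZMod 3` containing no
three distinct collinear points (three distinct points are collinear iff they sum to zero). -/
def IsCap {n : ℕ} (C : Finset (Fin n → ZMod 3)) : Prop :=
  ∀ x ∈ C, ∀ y ∈ C, ∀ z ∈ C, x ≠ y → x ≠ z → y ≠ z → x + y + z ≠ 0

/-- A maximal cap: a cap of largest possible size. -/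
def MaximalCap {n : ℕ} (C : Finset (Fin n → ZMod 3)) : Prop :=
  IsCap C ∧ ∀ D : Finset (Fin n → ZMod 3), IsCap D → D.card ≤ C.card

open Finset

/-! ### The upper bound on the size of a cap, by counting points on hyperplanes -/

/-- The slice of `S` by the hyperplane `w ⬝ x = c`. -/
def hslice {n : ℕ} (S : Finset (Fin n → ZMod 3)) (w : Fin n → ZMod 3) (c : ZMod 3) :
    Finset (Fin n → ZMod 3) := S.filter (fun x => w ⬝ᵥ x = c)

theorem IsCap.mono {n : ℕ} {S T : Finset (Fin n → ZMod 3)} (hT : IsCap T) (h : S ⊆ T) :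
    IsCap S := fun x hx y hy z hz => hT x (h hx) y (h hy) z (h hz)

/-- A bound for caps in dimension `n` bounds the hyperplane slices in dimension `n + 1`. -/
theorem slice_card_le {n b : ℕ} (hb : ∀ T : Finset (Fin n → ZMod 3), IsCap T → T.card ≤ b)
    {S : Finset (Fin (n + 1) → ZMod 3)} (hS : IsCap S) {w : Fin (n + 1) → ZMod 3} (hw : w ≠ 0)
    (c : ZMod 3) : (hslice S w c).card ≤ b := by
  obtain ⟨i, hi⟩ : ∃ i, w i ≠ 0 := by
    by_contra! h
    exact hw (funext h)
  have hi' : w i ≠ 0 := hi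
  have dec : ∀ x : Fin (n + 1) → ZMod 3,
      w ⬝ᵥ x = w i * x i + ∑ j, w (i.succAbove j) * x (i.succAbove j) := fun x => by
    rw [dotProduct, Fin.sum_univ_succAbove _ i]
  have inj : Set.InjOn (fun (x : Fin (n + 1) → ZMod 3) (j : Fin n) => x (i.succAbove j))
      (hslice S w c) := by
    intro x hx y hy hxy
    simp only [hslice, coe_filter, Set.mem_ofPred_eq] at hx hy
    have h1 := hx.2.trans hy.2.symm
    have h2 : ∀ j, x (i.succAbove j) = y (i.succAbove j) := fun j => congrFun hxy j
    rw [dec, dec] at h1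
    simp only [h2, add_left_inj] at h1
    have h3 := mul_left_cancel₀ hi' h1
    funext k
    rcases Fin.eq_self_or_eq_succAbove i k with rfl | ⟨j, rfl⟩
    · exact h3
    · exact h2 j
  rw [← card_image_of_injOn inj]
  apply hb
  intro x hx y hy z hz hxy hxz hyz hsum
  obtain ⟨x, hx1, rfl⟩ := mem_image.1 hx
  obtain ⟨y, hy1, rfl⟩ := mem_image.1 hy
  obtain ⟨z, hz1, rfl⟩ := mem_image.1 hz
  clear hx hy hz
  have hx := mem_filter.1 hx1
  have hy := mem_filter.1 hy1
  have hz := mem_filter.1 hz1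
  refine hS x hx.1 y hy.1 z hz.1 (by rintro rfl; exact hxy rfl) (by rintro rfl; exact hxz rfl)
    (by rintro rfl; exact hyz rfl) ?_
  have h2 : ∀ j, (x + y + z) (i.succAbove j) = 0 := fun j => congrFun hsum j
  have h1 : w ⬝ᵥ (x + y + z) = 0 := by
    rw [dotProduct_add, dotProduct_add, hx.2, hy.2, hz.2]
    have h3 : ∀ c : ZMod 3, c + c + c = 0 := by decide
    exact h3 c
  rw [dec] at h1
  simp only [h2, mul_zero, sum_const_zero, add_zero] at h1
  funext k
  rcases Fin.eq_self_or_eq_succAbove i k with rfl | ⟨j, rfl⟩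
  · exact (mul_eq_zero.1 h1).resolve_left hi'
  · exact h2 j

theorem slice_sum {n : ℕ} (S : Finset (Fin n → ZMod 3)) (w : Fin n → ZMod 3) :
    (hslice S w 0).card + (hslice S w 1).card + (hslice S w 2).card = S.card := by
  have h := card_eq_sum_card_fiberwise (s := S) (t := univ) (f := fun x => w ⬝ᵥ x)
    (fun x _ => by simp)
  rw [h]
  exact (Fin.sum_univ_three (fun c : Fin 3 => (hslice S w c).card)).symm

/-- Number of solutions of a system of independent homogeneous linear equations. -/
theorem card_solutions {n k : ℕ} (v : Fin k → Fin n → ZMod 3)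
    (hv : LinearIndependent (ZMod 3) v) :
    (univ.filter (fun w : Fin n → ZMod 3 => ∀ i, v i ⬝ᵥ w = 0)).card * 3 ^ k = 3 ^ n := by
  have hr : (Matrix.of v).rank = k := by
    have := LinearIndependent.rank_matrix (M := Matrix.of v) hv
    simpa using this
  have hrn := LinearMap.finrank_range_add_finrank_ker (Matrix.of v).mulVecLin
  rw [Matrix.rank] at hr
  rw [hr, Module.finrank_fin_fun] at hrn
  have hc := Module.natCard_eq_pow_finrank (K := ZMod 3)
    (V := LinearMap.ker (Matrix.of v).mulVecLin)
  have he : (univ.filter (fun w : Fin n → ZMod 3 => ∀ i, v i ⬝ᵥ w = 0)).card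
      = Nat.card (LinearMap.ker (Matrix.of v).mulVecLin) := by
    rw [← Fintype.card_subtype, ← Nat.card_eq_fintype_card]
    refine Nat.card_congr (Equiv.subtypeEquivRight fun w => ?_)
    rw [LinearMap.mem_ker, Matrix.mulVecLin_apply, funext_iff]
    rfl
  rw [he, hc, Nat.card_zmod, ← pow_add, add_comm, hrn]

theorem count_two {n : ℕ} (x y : Fin (n + 1) → ZMod 3) :
    (univ.filter (fun w : Fin (n + 1) → ZMod 3 => w ⬝ᵥ x = w ⬝ᵥ y)).card
      = 3 ^ n * (1 + if x = y then 2 else 0) := by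
  by_cases h : x = y
  · subst h
    simp [pow_succ]
  · have := card_solutions (n := n + 1) ![x - y] (by
      rw [linearIndependent_unique_iff]
      simpa [sub_eq_zero] using h)
    replace this := this.trans (pow_succ 3 n)
    have h2 := Nat.eq_of_mul_eq_mul_right (by norm_num) this
    simp only [h, if_false, add_zero, mul_one]
    rw [← h2]
    congr 1
    ext w
    simp [dotProduct_comm _ w, sub_eq_zero]

theorem count_three {n : ℕ} {x y z : Fin (n + 2) → ZMod 3}
    (h : x ≠ y → x ≠ z → y ≠ z → x + y + z ≠ 0) :
    (univ.filter (fun w : Fin (n + 2) → ZMod 3 => w ⬝ᵥ x = w ⬝ᵥ y ∧ w ⬝ᵥ x = w ⬝ᵥ z)).card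
      = 3 ^ n * (1 + (if x = y then 2 else 0) + (if x = z then 2 else 0)
        + (if y = z then 2 else 0) + (if x = y then if x = z then 2 else 0 else 0)) := by
  by_cases hxy : x = y
  · subst hxy
    simp only [true_and]
    rw [count_two]
    by_cases hxz : x = z <;> simp [hxz] <;> ring
  by_cases hxz : x = z
  · subst hxz
    simp only [and_true]
    rw [count_two]
    simp [hxy, Ne.symm hxy]
    ring
  by_cases hyz : y = z
  · subst hyz
    simp only [and_self]
    rw [count_two]
    simp [hxy]
    ring
  have hs := h hxy hxz hyz
  have := card_solutions (n := n + 2) ![x - y, x - z] (by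
    rw [LinearIndependent.pair_iff' (sub_ne_zero.2 hxy)]
    intro a ha
    have key : ∀ a p q r : ZMod 3, a * (p - q) = p - r →
        (a = 0 → p = r) ∧ (a = 1 → q = r) ∧ (a = 2 → p + q + r = 0) := by decide
    have hk := fun i => key a (x i) (y i) (z i) (by simpa using congrFun ha i)
    have h3 : a = 0 ∨ a = 1 ∨ a = 2 := by clear ha hk; revert a; decide
    rcases h3 with h3 | h3 | h3
    · exact hxz (funext fun i => (hk i).1 h3)
    · exact hyz (funext fun i => (hk i).2.1 h3)
    · exact hs (funext fun i => (hk i).2.2 h3))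
  rw [pow_add] at this
  have h2 := Nat.eq_of_mul_eq_mul_right (by norm_num) this
  simp only [hxy, hxz, hyz, if_false, add_zero, mul_one]
  rw [← h2]
  congr 1
  ext w
  simp [Fin.forall_fin_two, dotProduct_comm _ w, sub_eq_zero]

theorem slice_card {n : ℕ} (S : Finset (Fin n → ZMod 3)) (w : Fin n → ZMod 3) (c : ZMod 3) :
    (hslice S w c).card = ∑ x ∈ S, if w ⬝ᵥ x = c then 1 else 0 := by
  rw [hslice, card_filter]

theorem moment_two {n : ℕ} (S : Finset (Fin (n + 1) → ZMod 3)) :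
    ∑ w, ∑ c, (hslice S w c).card ^ 2 = 3 ^ n * (S.card ^ 2 + 2 * S.card) := by
  have h1 : ∀ w c, (hslice S w c).card ^ 2
      = ∑ x ∈ S, ∑ y ∈ S, if w ⬝ᵥ x = c then if w ⬝ᵥ x = w ⬝ᵥ y then 1 else 0 else 0 := by
    intro w c
    rw [slice_card, sq, sum_mul_sum]
    refine sum_congr rfl fun x _ => sum_congr rfl fun y _ => ?_
    grind
  have h2 : ∑ w, ∑ c, (hslice S w c).card ^ 2
      = ∑ x ∈ S, ∑ y ∈ S, ∑ w, if w ⬝ᵥ x = w ⬝ᵥ y then 1 else 0 := by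
    simp only [h1]
    have h3 : ∀ w : Fin (n + 1) → ZMod 3, (∑ c, ∑ x ∈ S, ∑ y ∈ S,
        if w ⬝ᵥ x = c then if w ⬝ᵥ x = w ⬝ᵥ y then 1 else 0 else 0)
        = ∑ x ∈ S, ∑ y ∈ S, if w ⬝ᵥ x = w ⬝ᵥ y then 1 else 0 := by
      intro w
      rw [sum_comm]
      refine sum_congr rfl fun x _ => ?_
      rw [sum_comm]
      refine sum_congr rfl fun y _ => ?_
      rw [sum_ite_eq]
      simp
    simp only [h3]
    rw [sum_comm]
    refine sum_congr rfl fun x _ => ?_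
    rw [sum_comm]
  rw [h2]
  simp only [← card_filter, count_two, ← mul_sum, sum_add_distrib, sum_ite_eq, sum_const]
  simp [sum_ite_mem]
  ring

theorem moment_three {n : ℕ} {S : Finset (Fin (n + 2) → ZMod 3)} (hS : IsCap S) :
    ∑ w, ∑ c, (hslice S w c).card ^ 3
      = 3 ^ n * (S.card ^ 3 + 6 * S.card ^ 2 + 2 * S.card) := by
  have h1 : ∀ w c, (hslice S w c).card ^ 3
      = ∑ x ∈ S, ∑ y ∈ S, ∑ z ∈ S, if w ⬝ᵥ x = c then
          if w ⬝ᵥ x = w ⬝ᵥ y ∧ w ⬝ᵥ x = w ⬝ᵥ z then 1 else 0 else 0 := by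
    intro w c
    rw [slice_card, pow_succ, sq, sum_mul_sum, sum_mul]
    refine sum_congr rfl fun x _ => ?_
    rw [sum_mul_sum]
    refine sum_congr rfl fun y _ => sum_congr rfl fun z _ => ?_
    grind
  have h2 : ∑ w, ∑ c, (hslice S w c).card ^ 3
      = ∑ x ∈ S, ∑ y ∈ S, ∑ z ∈ S, ∑ w,
        if w ⬝ᵥ x = w ⬝ᵥ y ∧ w ⬝ᵥ x = w ⬝ᵥ z then 1 else 0 := by
    simp only [h1]
    have h3 : ∀ w : Fin (n + 2) → ZMod 3, (∑ c, ∑ x ∈ S, ∑ y ∈ S, ∑ z ∈ S,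
        if w ⬝ᵥ x = c then if w ⬝ᵥ x = w ⬝ᵥ y ∧ w ⬝ᵥ x = w ⬝ᵥ z then 1 else 0 else 0)
        = ∑ x ∈ S, ∑ y ∈ S, ∑ z ∈ S,
          if w ⬝ᵥ x = w ⬝ᵥ y ∧ w ⬝ᵥ x = w ⬝ᵥ z then 1 else 0 := by
      intro w
      rw [sum_comm]
      refine sum_congr rfl fun x _ => ?_
      rw [sum_comm]
      refine sum_congr rfl fun y _ => ?_
      rw [sum_comm]
      refine sum_congr rfl fun z _ => ?_
      rw [sum_ite_eq]
      simp
    simp only [h3]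
    rw [sum_comm]
    refine sum_congr rfl fun x _ => ?_
    rw [sum_comm]
    refine sum_congr rfl fun y _ => ?_
    rw [sum_comm]
  rw [h2]
  have h4 : ∀ x ∈ S, ∀ y ∈ S, ∀ z ∈ S,
      (∑ w, if w ⬝ᵥ x = w ⬝ᵥ y ∧ w ⬝ᵥ x = w ⬝ᵥ z then 1 else 0)
      = 3 ^ n * (1 + (if x = y then 2 else 0) + (if x = z then 2 else 0)
        + (if y = z then 2 else 0) + (if x = y then if x = z then 2 else 0 else 0)) :=
    fun x hx y hy z hz => by rw [← card_filter, count_three (hS x hx y hy z hz)]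
  rw [sum_congr rfl fun x hx => sum_congr rfl fun y hy => sum_congr rfl fun z hz =>
    h4 x hx y hy z hz]
  have h5 : ∀ x ∈ S, ∀ y ∈ S, ∑ z ∈ S, (1 + (if x = y then 2 else 0) + (if x = z then 2 else 0)
        + (if y = z then 2 else 0) + (if x = y then if x = z then 2 else 0 else 0))
      = S.card + 4 + if x = y then 2 * S.card + 2 else 0 := by
    intro x hx y hy
    by_cases hxy : x = y
    · subst hxy
      simp [sum_add_distrib, hx]
      ring
    · simp [sum_add_distrib, hx, hy, hxy]
  have h6 : ∀ x ∈ S, ∑ y ∈ S, (S.card + 4 + if x = y then 2 * S.card + 2 else 0)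
      = S.card * (S.card + 4) + (2 * S.card + 2) := by
    intro x hx
    simp [sum_add_distrib, hx]
  simp only [← mul_sum]
  rw [sum_congr rfl fun x hx => sum_congr rfl fun y hy => h5 x hx y hy, sum_congr rfl h6,
    sum_const, smul_eq_mul]
  ring

/-- Sum of squares of the sizes of the slices in direction `w`. -/
def sqs {n : ℕ} (S : Finset (Fin n → ZMod 3)) (w : Fin n → ZMod 3) : ℕ :=
  ∑ c, (hslice S w c).card ^ 2

/-- Sum of cubes of the sizes of the slices in direction `w`. -/
def cubes {n : ℕ} (S : Finset (Fin n → ZMod 3)) (w : Fin n → ZMod 3) : ℕ :=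
  ∑ c, (hslice S w c).card ^ 3

theorem sum_three (f : ZMod 3 → ℕ) : ∑ c, f c = f 0 + f 1 + f 2 :=
  Fin.sum_univ_three (fun c : Fin 3 => f c)

theorem slice_zero {n : ℕ} (S : Finset (Fin n → ZMod 3)) :
    hslice S 0 0 = S ∧ hslice S 0 1 = ∅ ∧ hslice S 0 2 = ∅ := by
  refine ⟨?_, ?_, ?_⟩
  · simp [hslice]
  · simp [hslice]
  · have : (0 : ZMod 3) ≠ 2 := by decide
    simp [hslice, this]

theorem sqs_zero {n : ℕ} (S : Finset (Fin n → ZMod 3)) : sqs S 0 = S.card ^ 2 := by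
  rw [sqs, sum_three, (slice_zero S).1, (slice_zero S).2.1, (slice_zero S).2.2]
  simp

theorem cubes_zero {n : ℕ} (S : Finset (Fin n → ZMod 3)) : cubes S 0 = S.card ^ 3 := by
  rw [cubes, sum_three, (slice_zero S).1, (slice_zero S).2.1, (slice_zero S).2.2]
  simp

theorem sqs_sum {n : ℕ} (S : Finset (Fin (n + 1) → ZMod 3)) :
    S.card ^ 2 + ∑ w ∈ univ.erase 0, sqs S w = 3 ^ n * (S.card ^ 2 + 2 * S.card) := by
  rw [← moment_two, ← sqs_zero, add_sum_erase _ _ (mem_univ _)]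
  rfl

theorem cubes_sum {n : ℕ} {S : Finset (Fin (n + 2) → ZMod 3)} (hS : IsCap S) :
    S.card ^ 3 + ∑ w ∈ univ.erase 0, cubes S w
      = 3 ^ n * (S.card ^ 3 + 6 * S.card ^ 2 + 2 * S.card) := by
  rw [← moment_three hS, ← cubes_zero, add_sum_erase _ _ (mem_univ _)]
  rfl

theorem exists_subcap {n m : ℕ} {T : Finset (Fin n → ZMod 3)} (hT : IsCap T) (h : ¬ T.card ≤ m) :
    ∃ S : Finset (Fin n → ZMod 3), IsCap S ∧ S.card = m + 1 := by
  obtain ⟨S, hS, hc⟩ := exists_subset_card_eq (s := T) (n := m + 1) (by omega)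
  exact ⟨S, hT.mono hS, hc⟩

theorem cap_one (T : Finset (Fin 1 → ZMod 3)) (hT : IsCap T) : T.card ≤ 2 := by
  by_contra h
  have : T = univ := by
    apply eq_univ_of_card
    have := card_le_univ T
    simp at this ⊢
    omega
  subst this
  exact hT ![0] (by simp) ![1] (by simp) ![2] (by simp) (by decide) (by decide) (by decide)
    (by decide)

theorem cap_two (T : Finset (Fin 2 → ZMod 3)) (hT : IsCap T) : T.card ≤ 4 := by
  by_contra h
  obtain ⟨S, hS, hc⟩ := exists_subcap hT h
  have hsum : 25 + ∑ w ∈ univ.erase (0 : Fin 2 → ZMod 3), sqs S w = 105 := by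
    have h1 := sqs_sum S
    rw [hc] at h1
    norm_num at h1
    exact h1
  have hle : ∑ w ∈ univ.erase 0, sqs S w ≤ (univ.erase (0 : Fin 2 → ZMod 3)).card • 9 := by
    refine sum_le_card_nsmul _ _ _ fun w hw => ?_
    have hw0 : w ≠ 0 := (mem_erase.1 hw).1
    have h0 := slice_card_le cap_one hS hw0 0
    have h1 := slice_card_le cap_one hS hw0 1
    have h2 := slice_card_le cap_one hS hw0 2
    have hs := slice_sum S w
    rw [sqs, sum_three]
    generalize (hslice S w 0).card = a at *
    generalize (hslice S w 1).card = b at *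
    generalize (hslice S w 2).card = c at *
    rw [hc] at hs
    clear hsum hc
    obtain rfl : c = 5 - a - b := by omega
    interval_cases a <;> interval_cases b <;> omega
  simp at hle
  omega

theorem cap_three (T : Finset (Fin 3 → ZMod 3)) (hT : IsCap T) : T.card ≤ 9 := by
  by_contra h
  obtain ⟨S, hS, hc⟩ := exists_subcap hT h
  have hsum : 100 + ∑ w ∈ univ.erase (0 : Fin 3 → ZMod 3), sqs S w = 1080 := by
    have h1 := sqs_sum S
    rw [hc] at h1
    norm_num at h1
    exact h1
  have hle : ∑ w ∈ univ.erase 0, sqs S w ≤ (univ.erase (0 : Fin 3 → ZMod 3)).card • 36 := by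
    refine sum_le_card_nsmul _ _ _ fun w hw => ?_
    have hw0 : w ≠ 0 := (mem_erase.1 hw).1
    have h0 := slice_card_le cap_two hS hw0 0
    have h1 := slice_card_le cap_two hS hw0 1
    have h2 := slice_card_le cap_two hS hw0 2
    have hs := slice_sum S w
    rw [sqs, sum_three]
    generalize (hslice S w 0).card = a at *
    generalize (hslice S w 1).card = b at *
    generalize (hslice S w 2).card = c at *
    rw [hc] at hs
    clear hsum hc
    obtain rfl : c = 10 - a - b := by omega
    interval_cases a <;> interval_cases b <;> omega
  simp at hle
  omega

theorem sqs_neg {n : ℕ} (S : Finset (Fin n → ZMod 3)) (w : Fin n → ZMod 3) :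
    sqs S (-w) = sqs S w := by
  have h : ∀ c, hslice S (-w) c = hslice S w (-c) := by
    intro c
    ext x
    simp [hslice, neg_eq_iff_eq_neg]
  simp only [sqs, h]
  exact Equiv.sum_comp (Equiv.neg (ZMod 3)) (fun c => (hslice S w c).card ^ 2)

/-- The arithmetic of the possible hyperplane triples of a 21-cap. -/
theorem triple_arith : ∀ a < (10 : ℕ), ∀ b < (10 : ℕ), ∀ c < (10 : ℕ), a + b + c = 21 →
    19 * (a ^ 2 + b ^ 2 + c ^ 2) ≤ a ^ 3 + b ^ 3 + c ^ 3 + 1764 ∧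
    (19 * (a ^ 2 + b ^ 2 + c ^ 2) = a ^ 3 + b ^ 3 + c ^ 3 + 1764 →
      a ^ 2 + b ^ 2 + c ^ 2 = 147 ∨ a ^ 2 + b ^ 2 + c ^ 2 = 171) := by
  intro a ha b hb c hc h
  obtain rfl : c = 21 - a - b := by omega
  interval_cases a <;> interval_cases b <;> omega

theorem cap_four (T : Finset (Fin 4 → ZMod 3)) (hT : IsCap T) : T.card ≤ 20 := by
  by_contra h
  obtain ⟨S, hS, hc⟩ := exists_subcap hT h
  have hsq : 441 + ∑ w ∈ univ.erase (0 : Fin 4 → ZMod 3), sqs S w = 13041 := by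
    have h1 := sqs_sum S
    rw [hc] at h1
    norm_num at h1
    exact h1
  have hcu : 9261 + ∑ w ∈ univ.erase (0 : Fin 4 → ZMod 3), cubes S w = 107541 := by
    have h1 := cubes_sum hS
    rw [hc] at h1
    norm_num at h1
    exact h1
  have hcard : (univ.erase (0 : Fin 4 → ZMod 3)).card = 80 := by simp
  have htr : ∀ w ∈ univ.erase (0 : Fin 4 → ZMod 3), 19 * sqs S w ≤ cubes S w + 1764 ∧
      (19 * sqs S w = cubes S w + 1764 → sqs S w = 147 ∨ sqs S w = 171) := by
    intro w hw
    have hw0 : w ≠ 0 := (mem_erase.1 hw).1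
    have hs := slice_sum S w
    rw [hc] at hs
    rw [sqs, cubes, sum_three, sum_three]
    have hlt := fun c => Nat.lt_succ_of_le (slice_card_le cap_three hS hw0 c)
    exact triple_arith _ (hlt 0) _ (hlt 1) _ (hlt 2) hs
  -- the two weighted sums agree, so equality holds in every direction
  have heq : ∑ w ∈ univ.erase (0 : Fin 4 → ZMod 3), 19 * sqs S w
      = ∑ w ∈ univ.erase (0 : Fin 4 → ZMod 3), (cubes S w + 1764) := by
    rw [← mul_sum, sum_add_distrib, sum_const, hcard]
    simp only [smul_eq_mul]
    omega
  have hall := (sum_eq_sum_iff_of_le fun w hw => (htr w hw).1).1 heq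
  have hval : ∀ w ∈ univ.erase (0 : Fin 4 → ZMod 3),
      sqs S w = 147 + 24 * (if sqs S w = 171 then 1 else 0) := by
    intro w hw
    rcases (htr w hw).2 (hall w hw) with h | h <;> simp [h]
  have hs2 : ∑ w ∈ univ.erase (0 : Fin 4 → ZMod 3), sqs S w
      = ∑ w ∈ univ.erase (0 : Fin 4 → ZMod 3), (147 + 24 * (if sqs S w = 171 then 1 else 0)) :=
    sum_congr rfl hval
  rw [sum_add_distrib, ← mul_sum, sum_const, hcard] at hs2
  -- the number of directions of type (9,9,3), counted with sign, is odd
  have hodd : ∑ w ∈ univ.erase (0 : Fin 4 → ZMod 3), (if sqs S w = 171 then 1 else 0) = 35 := by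
    simp only [smul_eq_mul] at hs2
    omega
  -- but it is invariant under negation
  have heven : ∑ w ∈ univ.erase (0 : Fin 4 → ZMod 3),
      (if sqs S w = 171 then (1 : ZMod 2) else 0) = 0 := by
    refine sum_involution (fun w _ => -w) ?_ ?_ ?_ ?_
    · intro w _
      rw [sqs_neg]
      exact CharTwo.add_self_eq_zero _
    · intro w hw _ hww
      apply (mem_erase.1 hw).1
      funext i
      have : ∀ t : ZMod 3, -t = t → t = 0 := by decide
      exact this _ (congrFun hww i)
    · intro w hw
      simpa using hw
    · intro w _
      simp
  have hcast := congrArg (Nat.cast : ℕ → ZMod 2) hodd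
  push_cast at hcast
  rw [heven] at hcast
  revert hcast
  decide

/-! ### The four caps -/

def capA : Finset (Fin 4 → ZMod 3) :=
  {![0,0,0,1], ![0,0,0,2], ![0,0,1,0], ![0,0,2,0], ![0,1,0,0], ![0,1,1,1], ![0,2,0,0],
    ![0,2,2,2], ![1,0,0,0], ![1,0,1,1], ![1,1,0,2], ![1,1,2,0], ![1,2,1,2], ![1,2,2,1],
    ![2,0,0,0], ![2,0,2,2], ![2,1,1,2], ![2,1,2,1], ![2,2,0,1], ![2,2,1,0]}

def capB : Finset (Fin 4 → ZMod 3) :=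
  {![0,0,1,1], ![0,0,1,2], ![0,0,2,1], ![0,0,2,2], ![0,1,0,1], ![0,1,0,2], ![0,2,0,1],
    ![0,2,0,2], ![1,0,0,2], ![1,0,2,2], ![1,1,1,0], ![1,1,1,1], ![1,2,0,2], ![1,2,2,2],
    ![2,0,0,1], ![2,0,1,1], ![2,1,0,1], ![2,1,1,1], ![2,2,2,0], ![2,2,2,2]}

def capC : Finset (Fin 4 → ZMod 3) :=
  {![0,1,1,0], ![0,1,1,2], ![0,1,2,0], ![0,1,2,1], ![0,2,1,0], ![0,2,1,2], ![0,2,2,0],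
    ![0,2,2,1], ![1,0,1,2], ![1,1,1,2], ![1,2,0,1], ![1,2,1,0], ![1,2,1,1], ![1,2,2,0],
    ![2,0,2,1], ![2,1,0,2], ![2,1,1,0], ![2,1,2,0], ![2,1,2,2], ![2,2,2,1]}

def capD : Finset (Fin 4 → ZMod 3) :=
  {![0,1,2,2], ![0,2,1,1], ![1,0,0,1], ![1,0,1,0], ![1,0,2,0], ![1,0,2,1], ![1,1,0,0],
    ![1,1,0,1], ![1,1,2,1], ![1,1,2,2], ![1,2,0,0], ![2,0,0,2], ![2,0,1,0], ![2,0,1,2],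
    ![2,0,2,0], ![2,1,0,0], ![2,2,0,0], ![2,2,0,2], ![2,2,1,1], ![2,2,1,2]}

theorem maximalCap_of {C : Finset (Fin 4 → ZMod 3)}
    (h : ∀ x ∈ C, ∀ y ∈ C, x ≠ y → -(x + y) ∉ C) (hc : C.card = 20) : MaximalCap C := by
  refine ⟨fun x hx y hy z hz hxy _ _ hs => h x hx y hy hxy ?_, fun D hD => ?_⟩
  · rwa [neg_eq_of_add_eq_zero_right hs]
  · rw [hc]
    exact cap_four D hD

/-- `AG(4,3)` can be partitioned into four mutually disjoint maximal caps together with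
a single remaining point. -/
theorem AG43_partition_into_four_maximal_caps :
    ∃ (a : Fin 4 → ZMod 3) (A B C D : Finset (Fin 4 → ZMod 3)),
      MaximalCap A ∧ MaximalCap B ∧ MaximalCap C ∧ MaximalCap D ∧
      Disjoint A B ∧ Disjoint A C ∧ Disjoint A D ∧
      Disjoint B C ∧ Disjoint B D ∧ Disjoint C D ∧
      A ∪ B ∪ C ∪ D = Finset.univ \ {a} := by
  refine ⟨0, capA, capB, capC, capD, maximalCap_of (by decide +kernel) (by decide +kernel),
    maximalCap_of (by decide +kernel) (by decide +kernel),
    maximalCap_of (by decide +kernel) (by decide +kernel),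
    maximalCap_of (by decide +kernel) (by decide +kernel),
    by decide +kernel, by decide +kernel, by decide +kernel, by decide +kernel,
    by decide +kernel, by decide +kernel, by decide +kernel⟩
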